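/- Let ρ be an invertible density matrix on ℂⁿ, let H be an n×n Hermitian matrix, and let 0 ≤ α ≤ 1. Then 0 ≤ I_{ρ,α}(H) ≤ U_{ρ,α}(H) ≤ U_ρ(H), where U_ρ = U_{ρ,1/2}. -/

import Mathlib

/-!
In an eigenbasis of `ρ` with eigenvalues `λᵢ`, write `gᵢⱼ` for the entries of `H₀` and
`T s = Tr[ρ^s H₀ ρ^{1-s} H₀] = ∑ᵢⱼ λᵢ^s λⱼ^{1-s} |gᵢⱼ|²`. Then `V = T 1`, `I_α = V - T α` and
`U_α = √(V² - (T α)²)`, so the whole chain follows from `0 ≤ T (1/2) ≤ T α ≤ T 1`.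

Since `|gᵢⱼ| = |gⱼᵢ|`, both nontrivial inequalities may be checked on the symmetrized weights
`λᵢ^s λⱼ^{1-s} + λⱼ^s λᵢ^{1-s}`. The sum of the two terms is at least twice their geometric mean
`√(λᵢ λⱼ)`, and at most `λᵢ + λⱼ` by the weighted AM-GM inequality.
-/

open Matrix ComplexOrder

/-- Real power of a positive definite matrix via functional calculus
(eigendecomposition). -/
noncomputable def matRpow {n : ℕ} {ρ : Matrix (Fin n) (Fin n) ℂ} (hρ : ρ.PosDef) (s : ℝ) :
    Matrix (Fin n) (Fin n) ℂ :=
  (hρ.1.eigenvectorUnitary : Matrix (Fin n) (Fin n) ℂ) *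
    Matrix.diagonal (fun i => ((hρ.1.eigenvalues i ^ s : ℝ) : ℂ)) *
    (star (hρ.1.eigenvectorUnitary : Matrix (Fin n) (Fin n) ℂ))

/-- `H₀ = H - Tr[ρH]·I`. -/
noncomputable def H0 {n : ℕ} (ρ H : Matrix (Fin n) (Fin n) ℂ) : Matrix (Fin n) (Fin n) ℂ :=
  H - (Matrix.trace (ρ * H)) • (1 : Matrix (Fin n) (Fin n) ℂ)

/-- One-parameter Wigner–Yanase–Dyson skew information
`I_{ρ,α}(H) = Tr[ρH₀²] − Tr[ρ^α H₀ ρ^{1−α} H₀]`. -/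
noncomputable def wyd1I {n : ℕ} {ρ : Matrix (Fin n) (Fin n) ℂ} (hρ : ρ.PosDef) (α : ℝ)
    (H : Matrix (Fin n) (Fin n) ℂ) : ℝ :=
  (Matrix.trace (ρ * H0 ρ H * H0 ρ H)
    - Matrix.trace (matRpow hρ α * H0 ρ H * matRpow hρ (1-α) * H0 ρ H)).re

/-- `J_{ρ,α}(H) = Tr[ρH₀²] + Tr[ρ^α H₀ ρ^{1−α} H₀]`. -/
noncomputable def wyd1J {n : ℕ} {ρ : Matrix (Fin n) (Fin n) ℂ} (hρ : ρ.PosDef) (α : ℝ)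
    (H : Matrix (Fin n) (Fin n) ℂ) : ℝ :=
  (Matrix.trace (ρ * H0 ρ H * H0 ρ H)
    + Matrix.trace (matRpow hρ α * H0 ρ H * matRpow hρ (1-α) * H0 ρ H)).re

/-- The variance `V_ρ(H) = Tr[ρH₀²]`. -/
noncomputable def varRho {n : ℕ} (ρ H : Matrix (Fin n) (Fin n) ℂ) : ℝ :=
  (Matrix.trace (ρ * H0 ρ H * H0 ρ H)).re

/-- `U_{ρ,α}(H) = √(V_ρ(H)² − (V_ρ(H) − I_{ρ,α}(H))²)`. -/
noncomputable def wyd1U {n : ℕ} {ρ : Matrix (Fin n) (Fin n) ℂ} (hρ : ρ.PosDef) (α : ℝ)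
    (H : Matrix (Fin n) (Fin n) ℂ) : ℝ :=
  Real.sqrt (varRho ρ H ^ 2 - (varRho ρ H - wyd1I hρ α H) ^ 2)

section RealInequalities

variable {x y : ℝ}

theorem two_mul_sqrt_mul_le_rpow_mul_rpow_add_swap (hx : 0 ≤ x) (hy : 0 ≤ y) (s : ℝ) :
    2 * √(x * y) ≤ x ^ s * y ^ (1 - s) + y ^ s * x ^ (1 - s) := by
  have rpow_mul_rpow_one_sub {z : ℝ} (hz : 0 ≤ z) : z ^ s * z ^ (1 - s) = z := by
    rw [← Real.rpow_add' hz (by simp), add_sub_cancel, Real.rpow_one]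
  refine two_mul_le_add_of_sq_le_mul (by positivity) (by positivity) (le_of_eq ?_)
  calc √(x * y) ^ 2 = x * y := Real.sq_sqrt (mul_nonneg hx hy)
    _ = x ^ s * x ^ (1 - s) * (y ^ s * y ^ (1 - s)) := by
      rw [rpow_mul_rpow_one_sub hx, rpow_mul_rpow_one_sub hy]
    _ = x ^ s * y ^ (1 - s) * (y ^ s * x ^ (1 - s)) := by ring

theorem rpow_mul_rpow_add_swap_le_add (hx : 0 ≤ x) (hy : 0 ≤ y) {s : ℝ} (hs0 : 0 ≤ s)
    (hs1 : s ≤ 1) :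
    x ^ s * y ^ (1 - s) + y ^ s * x ^ (1 - s) ≤ x + y := by
  have hxy := Real.geom_mean_le_arith_mean2_weighted hs0 (sub_nonneg.2 hs1) hx hy
    (add_sub_cancel s 1)
  have hyx := Real.geom_mean_le_arith_mean2_weighted hs0 (sub_nonneg.2 hs1) hy hx
    (add_sub_cancel s 1)
  linarith

theorem sub_le_sqrt_sq_sub_sq (hy : 0 ≤ y) (hyx : y ≤ x) : x - y ≤ √(x ^ 2 - y ^ 2) := by
  refine Real.le_sqrt_of_sq_le ?_
  calc (x - y) ^ 2 = (x - y) * (x - y) := sq _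
    _ ≤ (x + y) * (x - y) :=
      mul_le_mul_of_nonneg_right (by linarith) (sub_nonneg.2 hyx)
    _ = x ^ 2 - y ^ 2 := (sq_sub_sq x y).symm

end RealInequalities

theorem sum_sum_mul_le_sum_sum_mul_of_symm {ι R : Type*} [Fintype ι] [Semiring R] [LinearOrder R]
    [IsStrictOrderedRing R] {w f g : ι → ι → R} (hw : ∀ i j, 0 ≤ w i j)
    (hsymm : ∀ i j, w i j = w j i) (hfg : ∀ i j, f i j + f j i ≤ g i j + g j i) :
    ∑ i, ∑ j, f i j * w i j ≤ ∑ i, ∑ j, g i j * w i j := by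
  have add_self_eq (h : ι → ι → R) : ∑ i, ∑ j, h i j * w i j + ∑ i, ∑ j, h i j * w i j =
      ∑ i, ∑ j, (h i j + h j i) * w i j := by
    have swap : ∑ i, ∑ j, h i j * w i j = ∑ i, ∑ j, h j i * w i j := by
      rw [Finset.sum_comm]
      simp only [fun i j => hsymm j i]
    nth_rewrite 2 [swap]
    simp only [add_mul, Finset.sum_add_distrib]
  refine le_of_not_gt fun hlt => (add_lt_add hlt hlt).not_ge ?_
  rw [add_self_eq, add_self_eq]
  exact Finset.sum_le_sum fun i _ => Finset.sum_le_sum fun j _ =>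
    mul_le_mul_of_nonneg_right (hfg i j) (hw i j)

section Matrix

variable {m n 𝕜 : Type*} [Fintype m] [Fintype n]

theorem isSelfAdjoint_trace_mul {R : Type*} [NonUnitalCommSemiring R] [StarRing R]
    {A B : Matrix n n R} (hA : A.IsHermitian) (hB : B.IsHermitian) :
    IsSelfAdjoint (A * B).trace := by
  rw [IsSelfAdjoint, ← trace_conjTranspose, conjTranspose_mul, hA.eq, hB.eq, trace_mul_comm]

variable [RCLike 𝕜] [DecidableEq n]

theorem trace_diagonal_mul_mul_diagonal_mul_conjTranspose [DecidableEq m] (a : m → 𝕜) (b : n → 𝕜)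
    (A : Matrix m n 𝕜) :
    (diagonal a * A * diagonal b * Aᴴ).trace = ∑ i, ∑ j, a i * b j * (‖A i j‖ : 𝕜) ^ 2 := by
  simp only [trace, diag_apply, mul_apply (N := Aᴴ), mul_diagonal, diagonal_mul,
    conjTranspose_apply]
  refine Finset.sum_congr rfl fun i _ => Finset.sum_congr rfl fun j _ => ?_
  rw [← RCLike.mul_conj, RCLike.star_def]
  ring

/-- The matrix of the operator `K` in the orthonormal eigenbasis of the Hermitian matrix `A` that
Mathlib chooses. -/
noncomputable def eigenbasisMatrix {A : Matrix n n 𝕜} (hA : A.IsHermitian) (K : Matrix n n 𝕜) :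
    Matrix n n 𝕜 :=
  (hA.eigenvectorUnitary : Matrix n n 𝕜)ᴴ * K * (hA.eigenvectorUnitary : Matrix n n 𝕜)

theorem norm_eigenbasisMatrix_symm {A K : Matrix n n 𝕜} (hA : A.IsHermitian) (hK : K.IsHermitian)
    (i j : n) : ‖eigenbasisMatrix hA K i j‖ = ‖eigenbasisMatrix hA K j i‖ := by
  have hG : (eigenbasisMatrix hA K).IsHermitian := isHermitian_conjTranspose_mul_mul _ hK
  rw [← hG.apply i j, norm_star]

end Matrix

section SkewTrace

variable {n : ℕ} {ρ K : Matrix (Fin n) (Fin n) ℂ}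

theorem matRpow_zero (hρ : ρ.PosDef) : matRpow hρ 0 = 1 := by
  simp [matRpow]

theorem matRpow_one (hρ : ρ.PosDef) : matRpow hρ 1 = ρ := by
  have hdiag := hρ.1.spectral_theorem
  rw [Unitary.conjStarAlgAut_apply] at hdiag
  simp only [matRpow, Real.rpow_one]
  exact hdiag.symm

theorem trace_matRpow_mul_mul_matRpow_mul_conjTranspose (hρ : ρ.PosDef) (s t : ℝ)
    (K : Matrix (Fin n) (Fin n) ℂ) :
    (matRpow hρ s * K * matRpow hρ t * Kᴴ).trace =
      ((∑ i, ∑ j, hρ.1.eigenvalues i ^ s * hρ.1.eigenvalues j ^ t *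
        ‖eigenbasisMatrix hρ.1 K i j‖ ^ 2 : ℝ) : ℂ) := by
  set U := (hρ.1.eigenvectorUnitary : Matrix (Fin n) (Fin n) ℂ) with hU
  set D : ℝ → Matrix (Fin n) (Fin n) ℂ :=
    fun r => diagonal fun i => ((hρ.1.eigenvalues i ^ r : ℝ) : ℂ) with hD
  set G := eigenbasisMatrix hρ.1 K with hG
  calc (matRpow hρ s * K * matRpow hρ t * Kᴴ).trace
      = (U * (D s * Uᴴ * K * U * D t * Uᴴ * Kᴴ)).trace := by
        simp only [matRpow, ← hU, hD, star_eq_conjTranspose, Matrix.mul_assoc]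
    _ = (D s * G * D t * Gᴴ).trace := by
        rw [trace_mul_comm]
        simp only [hG, eigenbasisMatrix, ← hU, conjTranspose_mul, conjTranspose_conjTranspose,
          Matrix.mul_assoc]
    _ = ((∑ i, ∑ j, hρ.1.eigenvalues i ^ s * hρ.1.eigenvalues j ^ t * ‖G i j‖ ^ 2 : ℝ) : ℂ) := by
        rw [trace_diagonal_mul_mul_diagonal_mul_conjTranspose]
        push_cast
        rfl

/-- The quantity `Tr[ρ^s K ρ^{1-s} K]` subtracted from `Tr[ρK²]` in the skew information of `K`.
It is real for Hermitian `K`, and encoded as the real part of the trace. -/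
noncomputable def skewTrace (hρ : ρ.PosDef) (K : Matrix (Fin n) (Fin n) ℂ) (s : ℝ) : ℝ :=
  (matRpow hρ s * K * matRpow hρ (1 - s) * K).trace.re

theorem skewTrace_one (hρ : ρ.PosDef) (K : Matrix (Fin n) (Fin n) ℂ) :
    skewTrace hρ K 1 = (ρ * K * K).trace.re := by
  rw [skewTrace, sub_self, matRpow_one, matRpow_zero, Matrix.mul_one]

theorem skewTrace_eq_sum (hρ : ρ.PosDef) (hK : K.IsHermitian) (s : ℝ) :
    skewTrace hρ K s = ∑ i, ∑ j, hρ.1.eigenvalues i ^ s * hρ.1.eigenvalues j ^ (1 - s) *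
      ‖eigenbasisMatrix hρ.1 K i j‖ ^ 2 := by
  have htrace := trace_matRpow_mul_mul_matRpow_mul_conjTranspose hρ s (1 - s) K
  rw [hK.eq] at htrace
  rw [skewTrace, htrace, Complex.ofReal_re]

theorem skewTrace_nonneg (hρ : ρ.PosDef) (hK : K.IsHermitian) (s : ℝ) : 0 ≤ skewTrace hρ K s := by
  rw [skewTrace_eq_sum hρ hK]
  have hpos := hρ.posSemidef.eigenvalues_nonneg
  exact Finset.sum_nonneg fun i _ => Finset.sum_nonneg fun j _ => mul_nonneg
    (mul_nonneg (Real.rpow_nonneg (hpos i) s) (Real.rpow_nonneg (hpos j) _)) (sq_nonneg _)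

theorem skewTrace_le_skewTrace_of_rpow_le (hρ : ρ.PosDef) (hK : K.IsHermitian) {s t : ℝ}
    (hst : ∀ x y : ℝ, 0 < x → 0 < y →
      x ^ s * y ^ (1 - s) + y ^ s * x ^ (1 - s) ≤ x ^ t * y ^ (1 - t) + y ^ t * x ^ (1 - t)) :
    skewTrace hρ K s ≤ skewTrace hρ K t := by
  rw [skewTrace_eq_sum hρ hK, skewTrace_eq_sum hρ hK]
  refine sum_sum_mul_le_sum_sum_mul_of_symm (fun _ _ => sq_nonneg _) (fun i j => ?_) fun i j =>
    hst _ _ (hρ.eigenvalues_pos i) (hρ.eigenvalues_pos j)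
  rw [norm_eigenbasisMatrix_symm hρ.1 hK]

theorem skewTrace_half_le_skewTrace (hρ : ρ.PosDef) (hK : K.IsHermitian) (s : ℝ) :
    skewTrace hρ K (1 / 2) ≤ skewTrace hρ K s := by
  refine skewTrace_le_skewTrace_of_rpow_le hρ hK fun x y hx hy => ?_
  calc x ^ (1 / 2 : ℝ) * y ^ (1 - 1 / 2 : ℝ) + y ^ (1 / 2 : ℝ) * x ^ (1 - 1 / 2 : ℝ)
      = 2 * √(x * y) := by
        rw [sub_half, ← Real.sqrt_eq_rpow, ← Real.sqrt_eq_rpow, Real.sqrt_mul hx.le]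
        ring
    _ ≤ x ^ s * y ^ (1 - s) + y ^ s * x ^ (1 - s) :=
        two_mul_sqrt_mul_le_rpow_mul_rpow_add_swap hx.le hy.le s

theorem skewTrace_le_skewTrace_one (hρ : ρ.PosDef) (hK : K.IsHermitian) {s : ℝ} (hs0 : 0 ≤ s)
    (hs1 : s ≤ 1) : skewTrace hρ K s ≤ skewTrace hρ K 1 := by
  refine skewTrace_le_skewTrace_of_rpow_le hρ hK fun x y hx hy => ?_
  simpa only [sub_self, Real.rpow_zero, Real.rpow_one, mul_one] using
    rpow_mul_rpow_add_swap_le_add hx.le hy.le hs0 hs1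

end SkewTrace

section SkewInformation

variable {n : ℕ} {ρ H : Matrix (Fin n) (Fin n) ℂ}

theorem isHermitian_H0 (hρ : ρ.IsHermitian) (hH : H.IsHermitian) : (H0 ρ H).IsHermitian :=
  hH.sub (isHermitian_one.smul (isSelfAdjoint_trace_mul hρ hH))

theorem varRho_eq_skewTrace_one (hρ : ρ.PosDef) (H : Matrix (Fin n) (Fin n) ℂ) :
    varRho ρ H = skewTrace hρ (H0 ρ H) 1 :=
  (skewTrace_one hρ (H0 ρ H)).symm

theorem wyd1I_eq_sub (hρ : ρ.PosDef) (α : ℝ) (H : Matrix (Fin n) (Fin n) ℂ) :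
    wyd1I hρ α H = skewTrace hρ (H0 ρ H) 1 - skewTrace hρ (H0 ρ H) α := by
  rw [wyd1I, Complex.sub_re, skewTrace_one, skewTrace]

theorem wyd1U_eq_sqrt (hρ : ρ.PosDef) (α : ℝ) (H : Matrix (Fin n) (Fin n) ℂ) :
    wyd1U hρ α H = √(skewTrace hρ (H0 ρ H) 1 ^ 2 - skewTrace hρ (H0 ρ H) α ^ 2) := by
  rw [wyd1U, varRho_eq_skewTrace_one hρ, wyd1I_eq_sub, sub_sub_cancel]

theorem wyd1_U_chain_general (hρ : ρ.PosDef) (hH : H.IsHermitian) {α : ℝ} (hα0 : 0 ≤ α)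
    (hα1 : α ≤ 1) :
    0 ≤ wyd1I hρ α H ∧ wyd1I hρ α H ≤ wyd1U hρ α H ∧ wyd1U hρ α H ≤ wyd1U hρ (1 / 2) H := by
  have hK := isHermitian_H0 hρ.1 hH
  have h_le_one := skewTrace_le_skewTrace_one hρ hK hα0 hα1
  have h_half_le := skewTrace_half_le_skewTrace hρ hK α
  rw [wyd1I_eq_sub, wyd1U_eq_sqrt, wyd1U_eq_sqrt]
  refine ⟨sub_nonneg.2 h_le_one, sub_le_sqrt_sq_sub_sq (skewTrace_nonneg hρ hK α) h_le_one, ?_⟩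
  have h_half_nonneg := skewTrace_nonneg hρ hK (1 / 2)
  exact Real.sqrt_le_sqrt (sub_le_sub_left (pow_le_pow_left₀ h_half_nonneg h_half_le 2) _)

end SkewInformation

/-- `0 ≤ I_{ρ,α}(H) ≤ U_{ρ,α}(H) ≤ U_ρ(H)`, where `U_ρ = U_{ρ,1/2}`. -/
theorem wyd1_U_chain {n : ℕ} (ρ H : Matrix (Fin n) (Fin n) ℂ) (hρ : ρ.PosDef)
    (hρtr : Matrix.trace ρ = 1) (hH : H.IsHermitian) (α : ℝ) (hα0 : 0 ≤ α) (hα1 : α ≤ 1) :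
    0 ≤ wyd1I hρ α H ∧ wyd1I hρ α H ≤ wyd1U hρ α H ∧ wyd1U hρ α H ≤ wyd1U hρ (1/2) H :=
  wyd1_U_chain_general hρ hH hα0 hα1
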